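/- arXiv:1607.06294 — 2 statements merged into one kernel-verified Lean document; each statement's English description precedes it below -/
import Mathlib

section
/- The unilateral clustering method H^U satisfies the Alternative Axiom of Value (A1'') and the Axiom of Transformation (A2). That is: (i) for the two-node network Δ₂(α,β) = ({p,q}, A) with A(p,q) = α, A(q,p) = β, α,β > 0, the unilateral ultrametric satisfies u^U(p,q) = min(α,β); and (ii) for any two networks (X, A_X) and (Y, A_Y) and any map φ : X → Y with A_X(x,x') ≥ A_Y(φ(x),φ(x')) for all x,x' ∈ X, the unilateral ultrametrics satisfy u^U_X(x,x') ≥ u^U_Y(φ(x),φ(x')) for all x,x' ∈ X. -/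
noncomputable section

/-- A dissimilarity function on a node set: nonnegative and zero exactly on the diagonal.
It need not be symmetric nor satisfy the triangle inequality. -/
def IsDissim {X : Type} (A : X → X → ℝ) : Prop :=
  (∀ x x', 0 ≤ A x x') ∧ (∀ x x', A x x' = 0 ↔ x = x')

/-- A symmetric dissimilarity. -/
def IsSym {X : Type} (A : X → X → ℝ) : Prop := ∀ x x', A x x' = A x' x

/-- An ultrametric: nonnegative, zero exactly on the diagonal, symmetric, and
satisfying the strong triangle inequality. -/
def IsUltrametric {X : Type} (u : X → X → ℝ) : Prop :=
  (∀ x x', 0 ≤ u x x') ∧ (∀ x x', u x x' = 0 ↔ x = x') ∧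
    (∀ x x', u x x' = u x' x) ∧
    (∀ x x' x'', u x x'' ≤ max (u x x') (u x' x''))

/-- The cost of the chain `x :: l`: the maximum dissimilarity over consecutive links. -/
def chainCost {X : Type} (A : X → X → ℝ) : X → List X → ℝ
  | _, [] => 0
  | x, y :: l => max (A x y) (chainCost A y l)

/-- The set of costs of chains from `x` to `x'`. -/
def chainCosts {X : Type} (A : X → X → ℝ) (x x' : X) : Set ℝ :=
  {c | ∃ l : List X, (x :: l).getLast (List.cons_ne_nil x l) = x' ∧ chainCost A x l = c}

/-- The directed minimum chain cost `ũ*_X(x,x')`: minimum cost over all chains from `x` to `x'`. -/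
def minChainCost {X : Type} (A : X → X → ℝ) (x x' : X) : ℝ :=
  sInf (chainCosts A x x')

/-- The nonreciprocal ultrametric `u^NR`. -/
def nonrecipUltra {X : Type} (A : X → X → ℝ) (x x' : X) : ℝ :=
  max (minChainCost A x x') (minChainCost A x' x)

/-- The reciprocal ultrametric `u^R`. -/
def recipUltra {X : Type} (A : X → X → ℝ) (x x' : X) : ℝ :=
  minChainCost (fun a b => max (A a b) (A b a)) x x'

/-- The unilateral ultrametric `u^U`. -/
def uniUltra {X : Type} (A : X → X → ℝ) (x x' : X) : ℝ :=
  minChainCost (fun a b => min (A a b) (A b a)) x x'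

/-- The minimum loop cost `mlc(X, A_X)`: minimum cost over loops, i.e. chains from some
node `x` back to itself containing at least one node different from `x`. -/
def mlc {X : Type} (A : X → X → ℝ) : ℝ :=
  sInf {c | ∃ (x : X) (l : List X),
    (x :: l).getLast (List.cons_ne_nil x l) = x ∧ (∃ y ∈ l, y ≠ x) ∧ chainCost A x l = c}

/-- The separation `sep(X, A_X)`: minimum dissimilarity over pairs of distinct nodes. -/
def sep {X : Type} (A : X → X → ℝ) : ℝ :=
  sInf {c | ∃ x x' : X, x ≠ x' ∧ A x x' = c}

/-- A hierarchical clustering method: assigns to every (finite) network an output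
two-variable function on the same node set. -/
abbrev HCMethod := ∀ (X : Type) [Fintype X], (X → X → ℝ) → X → X → ℝ

/-- A hierarchical clustering method outputs an ultrametric on every network. -/
def IsHCMethod (H : HCMethod) : Prop :=
  ∀ (X : Type) [Fintype X] (A : X → X → ℝ), IsDissim A → IsUltrametric (H X A)

/-- `p, q` are the two (distinct) nodes of a two-node set. -/
def TwoNode {X : Type} (p q : X) : Prop := p ≠ q ∧ ∀ x : X, x = p ∨ x = q

/-- Axiom of Value (A1): on every two-node network the output clusters the two nodes at
the maximum of the two dissimilarities. -/
def AxiomValue (H : HCMethod) : Prop :=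
  ∀ (X : Type) [Fintype X] (p q : X), TwoNode p q →
    ∀ A : X → X → ℝ, IsDissim A → H X A p q = max (A p q) (A q p)

/-- Axiom of Transformation (A2): dissimilarity-reducing maps do not increase output values. -/
def AxiomTransform (H : HCMethod) : Prop :=
  ∀ (X Y : Type) [Fintype X] [Fintype Y] (AX : X → X → ℝ) (AY : Y → Y → ℝ),
    IsDissim AX → IsDissim AY →
    ∀ φ : X → Y, (∀ x x', AY (φ x) (φ x') ≤ AX x x') →
    ∀ x x' : X, H Y AY (φ x) (φ x') ≤ H X AX x x'

/-- The canonical dissimilarity `A_{n,α,β}` on `Fin n`: `α` for `i > j`, `β` for `i < j`,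
`0` on the diagonal. -/
def canonDissim (n : ℕ) (α β : ℝ) : Fin n → Fin n → ℝ :=
  fun i j => if i = j then 0 else if j < i then α else β

/-- Extended Axiom of Value (A1'): on every permuted canonical network `Δ_n(α,β,Π)` the
output ultrametric equals `max(α,β)` off the diagonal. -/
def ExtAxiomValue (H : HCMethod) : Prop :=
  ∀ (n : ℕ) (α β : ℝ), 0 < α → 0 < β → ∀ π : Equiv.Perm (Fin n),
    ∀ i j : Fin n, i ≠ j →
      H (Fin n) (fun i j => canonDissim n α β (π i) (π j)) i j = max α β

/-- Alternative Axiom of Value (A1''): on every two-node network the output clusters the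
two nodes at the minimum of the two dissimilarities. -/
def AltAxiomValue (H : HCMethod) : Prop :=
  ∀ (X : Type) [Fintype X] (p q : X), TwoNode p q →
    ∀ A : X → X → ℝ, IsDissim A → H X A p q = min (A p q) (A q p)

/-- Agnostic Axiom of Value (A1'''): on every two-node network the output value lies
between the minimum and maximum of the two dissimilarities. -/
def AgnAxiomValue (H : HCMethod) : Prop :=
  ∀ (X : Type) [Fintype X] (p q : X), TwoNode p q →
    ∀ A : X → X → ℝ, IsDissim A →
      min (A p q) (A q p) ≤ H X A p q ∧ H X A p q ≤ max (A p q) (A q p)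

theorem chainCost_nonneg_aux {X : Type} (A : X → X → ℝ) (x : X) (l : List X) :
    0 ≤ chainCost A x l := by
  induction l generalizing x with
  | nil => simp [chainCost]
  | cons y l ih => exact le_trans (ih y) (le_max_right _ _)

theorem chainCost_map_aux {X Y : Type} (A : X → X → ℝ) (B : Y → Y → ℝ) (φ : X → Y)
    (h : ∀ x x', B (φ x) (φ x') ≤ A x x') (x : X) (l : List X) :
    chainCost B (φ x) (l.map φ) ≤ chainCost A x l := by
  induction l generalizing x with
  | nil => simp [chainCost]
  | cons y l ih => exact max_le_max (h x y) (ih y)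

theorem chainCosts_bdd_aux {X : Type} (A : X → X → ℝ) (x x' : X) :
    BddBelow (chainCosts A x x') :=
  ⟨0, by rintro c ⟨l, -, rfl⟩; exact chainCost_nonneg_aux A x l⟩

theorem chainCosts_nonempty_aux {X : Type} (A : X → X → ℝ) (x x' : X) :
    (chainCosts A x x').Nonempty :=
  ⟨_, [x'], by simp, rfl⟩

theorem two_node_cost_aux {X : Type} (A : X → X → ℝ) (p q : X) (h : TwoNode p q)
    (l : List X) (hl : (p :: l).getLast (List.cons_ne_nil p l) = q) :
    A p q ≤ chainCost A p l := by
  induction l with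
  | nil => exact absurd (by simpa using hl) h.1
  | cons y l ih =>
    rcases h.2 y with rfl | rfl
    · exact le_trans (ih (by simpa using hl)) (le_max_right _ _)
    · exact le_max_left _ _

/-- Unilateral clustering satisfies the Alternative Axiom of Value (A1'') and
the Axiom of Transformation (A2). -/
theorem unilateral_admissible :
    (∀ (X : Type) [Fintype X] (p q : X), TwoNode p q →
        ∀ A : X → X → ℝ, IsDissim A → uniUltra A p q = min (A p q) (A q p)) ∧
    (∀ (X Y : Type) [Fintype X] [Fintype Y]
        (AX : X → X → ℝ) (AY : Y → Y → ℝ), IsDissim AX → IsDissim AY →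
        ∀ φ : X → Y, (∀ x x', AY (φ x) (φ x') ≤ AX x x') →
        ∀ x x' : X, uniUltra AY (φ x) (φ x') ≤ uniUltra AX x x') := by
  refine ⟨?_, ?_⟩
  · intro X _ p q h A hA
    apply le_antisymm
    · apply csInf_le (chainCosts_bdd_aux _ _ _)
      refine ⟨[q], by simp, ?_⟩
      simp only [chainCost]
      exact max_eq_left (le_min (hA.1 _ _) (hA.1 _ _))
    · apply le_csInf (chainCosts_nonempty_aux _ _ _)
      rintro c ⟨l, hl, rfl⟩
      exact two_node_cost_aux (fun a b => min (A a b) (A b a)) p q h l hl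
  · intro X Y _ _ AX AY _ _ φ hφ x x'
    apply le_csInf (chainCosts_nonempty_aux _ _ _)
    rintro c ⟨l, hl, rfl⟩
    refine le_trans (csInf_le (chainCosts_bdd_aux _ _ _) ⟨l.map φ, ?_, rfl⟩)
      (chainCost_map_aux _ _ φ (fun a b => min_le_min (hφ a b) (hφ b a)) x l)
    have h2 := List.getLast_map (f := φ) (l := x :: l) (by simp)
    rw [← hl, ← h2]
    rfl
end
end

section
/- Let (X, A_X) be any network, δ > 0 a constant, and x, x' ∈ X nodes such that the directed minimum chain cost satisfies ũ*_X(x,x') ≥ δ. Then there exists a partition of the node set X into two blocks B and B' with x ∈ B and x' ∈ B' such that A_X(b, b') ≥ δ for all b ∈ B and b' ∈ B'. -/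
noncomputable section

/-- A path of links shorter than `δ` gives a chain of cost less than `δ`. -/
lemma exists_chain_of_reflTransGen {X : Type} (A : X → X → ℝ) (δ : ℝ) (hδ : 0 < δ)
    (x x' : X) (h : Relation.ReflTransGen (fun a b => A a b < δ) x x') :
    ∃ l : List X, (x :: l).getLast (List.cons_ne_nil x l) = x' ∧ chainCost A x l < δ := by
  induction h using Relation.ReflTransGen.head_induction_on with
  | refl => exact ⟨[], rfl, hδ⟩
  | head hab _ ih =>
    rename_i a c _
    obtain ⟨l, hl, hc⟩ := ih
    refine ⟨c :: l, ?_, max_lt hab hc⟩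
    rw [List.getLast_cons (List.cons_ne_nil c l)]
    exact hl

lemma chainCost_nonneg' {X : Type} (A : X → X → ℝ) (l : List X) :
    ∀ x, 0 ≤ chainCost A x l := by
  induction l with
  | nil => intro x; exact le_refl _
  | cons y l ih => intro x; exact le_max_of_le_right (ih y)

/-- If the directed minimum chain cost from `x` to `x'` is at least `δ`, the
node set can be partitioned into two blocks `B ∋ x` and `B' ∋ x'` such that every
dissimilarity from `B` to `B'` is at least `δ`. -/
theorem partition_of_large_minChainCost
    (X : Type) [Fintype X] (A : X → X → ℝ) (hA : IsDissim A)
    (δ : ℝ) (hδ : 0 < δ) (x x' : X) (h : δ ≤ minChainCost A x x') :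
    ∃ B B' : Set X, B ∪ B' = Set.univ ∧ B ∩ B' = ∅ ∧ x ∈ B ∧ x' ∈ B' ∧
      ∀ b ∈ B, ∀ b' ∈ B', δ ≤ A b b' := by
  refine ⟨{y | Relation.ReflTransGen (fun a b => A a b < δ) x y},
    {y | Relation.ReflTransGen (fun a b => A a b < δ) x y}ᶜ,
    Set.union_compl_self _, Set.inter_compl_self _, Relation.ReflTransGen.refl, ?_, ?_⟩
  · intro hx
    obtain ⟨l, hl, hc⟩ := exists_chain_of_reflTransGen A δ hδ x x' hx
    have hle : minChainCost A x x' ≤ chainCost A x l := by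
      refine csInf_le ⟨0, ?_⟩ ⟨l, hl, rfl⟩
      rintro c ⟨l', _, rfl⟩
      exact chainCost_nonneg' A l' x
    linarith
  · intro b hb b' hb'
    by_contra hlt
    exact hb' (Relation.ReflTransGen.tail hb (not_le.mp hlt))
end
end
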